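/- arXiv:1912.09181 — 3 statements merged into one kernel-verified Lean document; each statement's English description precedes it below -/
import Mathlib

section
/- Let (i, j, k) be a permutation of (1, 2, 3). If Φ = (φ₁, φ₂, φ₃) ∈ ℝ³ satisfies φ_k = 0, φ_i + φ_j = 1 and φ_i ∈ (−δ, 1+δ), then W(Φ) = (Σ_i + Σ_j)·W_dw(φ_i), i.e. on the binary edge between pure phases i and j the triple-well potential reduces to the scaled double-well potential. -/
/-- The cutoff function ℓ. -/
noncomputable def ell (x : ℝ) : ℝ := if x < 0 then x ^ 2 / (1 + x) else 0

/-- The double-well potential. -/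
noncomputable def Wdw (δ φ : ℝ) : ℝ :=
  18 * φ ^ 2 * (1 - φ) ^ 2 + δ * ell (φ / δ) + δ * ell ((1 - φ) / δ)

/-- Σ_T = (Σ₁⁻¹ + Σ₂⁻¹ + Σ₃⁻¹)⁻¹. -/
noncomputable def SigT (S : Fin 3 → ℝ) : ℝ := ((S 0)⁻¹ + (S 1)⁻¹ + (S 2)⁻¹)⁻¹

/-- The projection P(Φ) = Φ + Σ_T(1 − φ₁ − φ₂ − φ₃)(Σ₁⁻¹, Σ₂⁻¹, Σ₃⁻¹). -/
noncomputable def Pproj (S : Fin 3 → ℝ) (Φ : Fin 3 → ℝ) : Fin 3 → ℝ :=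
  fun m => Φ m + SigT S * (1 - (Φ 0 + Φ 1 + Φ 2)) * (S m)⁻¹

/-- The triple-well potential W₀(Ψ) = Σ₁W_dw(ψ₁) + Σ₂W_dw(ψ₂) + Σ₃W_dw(ψ₃). -/
noncomputable def W0 (δ : ℝ) (S : Fin 3 → ℝ) (Ψ : Fin 3 → ℝ) : ℝ :=
  S 0 * Wdw δ (Ψ 0) + S 1 * Wdw δ (Ψ 1) + S 2 * Wdw δ (Ψ 2)

/-- W(Φ) = W₀(P(Φ)). -/
noncomputable def Wtriple (δ : ℝ) (S : Fin 3 → ℝ) (Φ : Fin 3 → ℝ) : ℝ := W0 δ S (Pproj S Φ)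

theorem sum_eq_add_add_of_card_eq_three {ι M : Type*} [Fintype ι] [AddCommMonoid M]
    (hι : Fintype.card ι = 3) {i j k : ι} (hij : i ≠ j) (hik : i ≠ k) (hjk : j ≠ k) (f : ι → M) :
    ∑ m, f m = f i + f j + f k := by
  classical
  have huniv : ({i, j, k} : Finset ι) = Finset.univ :=
    Finset.eq_univ_of_card _ (by rw [Finset.card_eq_three.mpr ⟨i, j, k, hij, hik, hjk, rfl⟩, hι])
  rw [← huniv, Finset.sum_insert (by simp [hij, hik]), Finset.sum_pair hjk, add_assoc]

theorem ell_of_nonneg {x : ℝ} (hx : 0 ≤ x) : ell x = 0 := if_neg hx.not_gt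

theorem Wdw_zero {δ : ℝ} (hδ : 0 < δ) : Wdw δ 0 = 0 := by
  simp [Wdw, ell_of_nonneg, hδ.le]

theorem Wdw_one_sub (δ φ : ℝ) : Wdw δ (1 - φ) = Wdw δ φ := by
  simp only [Wdw, sub_sub_cancel]
  ring

theorem Pproj_eq_self_of_sum_eq_one (S : Fin 3 → ℝ) {Φ : Fin 3 → ℝ} (hΦ : ∑ m, Φ m = 1) :
    Pproj S Φ = Φ := by
  rw [Fin.sum_univ_three] at hΦ
  funext m
  simp [Pproj, hΦ]

theorem W0_eq_sum (δ : ℝ) (S Ψ : Fin 3 → ℝ) : W0 δ S Ψ = ∑ m, S m * Wdw δ (Ψ m) := by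
  rw [W0, Fin.sum_univ_three]

theorem Wtriple_eq_W0_of_sum_eq_one (δ : ℝ) (S : Fin 3 → ℝ) {Φ : Fin 3 → ℝ}
    (hΦ : ∑ m, Φ m = 1) : Wtriple δ S Φ = W0 δ S Φ := by
  rw [Wtriple, Pproj_eq_self_of_sum_eq_one S hΦ]

theorem Wtriple_binary_edge_general {δ : ℝ} (hδ : 0 < δ) (S : Fin 3 → ℝ)
    {i j k : Fin 3} (hij : i ≠ j) (hik : i ≠ k) (hjk : j ≠ k)
    {Φ : Fin 3 → ℝ} (hk : Φ k = 0) (hsum : Φ i + Φ j = 1) :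
    Wtriple δ S Φ = (S i + S j) * Wdw δ (Φ i) := by
  have sum_eq (f : Fin 3 → ℝ) : ∑ m, f m = f i + f j + f k :=
    sum_eq_add_add_of_card_eq_three (Fintype.card_fin 3) hij hik hjk f
  have htotal : ∑ m, Φ m = 1 := by rw [sum_eq, hk, hsum, add_zero]
  have hj : Φ j = 1 - Φ i := eq_sub_of_add_eq' hsum
  calc Wtriple δ S Φ
      = W0 δ S Φ := Wtriple_eq_W0_of_sum_eq_one δ S htotal
    _ = S i * Wdw δ (Φ i) + S j * Wdw δ (Φ j) + S k * Wdw δ (Φ k) := by rw [W0_eq_sum, sum_eq]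
    _ = S i * Wdw δ (Φ i) + S j * Wdw δ (Φ i) := by
      rw [hj, Wdw_one_sub, hk, Wdw_zero hδ, mul_zero, add_zero]
    _ = (S i + S j) * Wdw δ (Φ i) := (add_mul _ _ _).symm

/-- on the binary edge between pure phases i and j (with phase k absent),
the triple-well potential reduces to the scaled double-well potential. -/
theorem Wtriple_binary_edge (δ : ℝ) (hδ : δ ∈ Set.Ioo (0 : ℝ) (1 / 2))
    (S : Fin 3 → ℝ) (hS : ∀ m, 0 < S m)
    (i j k : Fin 3) (hij : i ≠ j) (hik : i ≠ k) (hjk : j ≠ k)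
    (Φ : Fin 3 → ℝ) (hk : Φ k = 0) (hsum : Φ i + Φ j = 1)
    (hmem : Φ i ∈ Set.Ioo (-δ) (1 + δ)) :
    Wtriple δ S Φ = (S i + S j) * Wdw δ (Φ i) :=
  Wtriple_binary_edge_general hδ.1 S hij hik hjk hk hsum
end

section
/- (Navier-slip condition.) Let γ₁, γ₃, ρ₃, d₀ > 0 and set λ = √(ρ₃d₀/(2γ₃)). Suppose v : ℝ → ℝ is twice differentiable and bounded on (−∞, 0], satisfies 2γ₃·v''(x) − ρ₃d₀·v(x) = 0 for all x ≤ 0, and suppose w : ℝ → ℝ is differentiable at 0 with w(0) = v(0) (continuity of the velocity across the interface) and γ₁·w'(0) = γ₃·v'(0) (zero jump of tangential stress). Then w(0) = L·w'(0) with slip length L = γ₁·√(2/(ρ₃d₀γ₃)). -/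
/-!
Set `l = lam`. The equation `v'' = l ^ 2 • v` factors into two first-order ones: `v' + l • v` solves
`u' = l • u` and `v' - l • v` solves `u' = -l • u`, so `v' - l • v` measures the mode `exp (-l x)`
that blows up as `x → -∞`. A solution negligible against that mode therefore satisfies
the Robin condition `v' = l • v` at the interface. Stress continuity replaces `γ₃ • v' 0` by
`γ₁ • w' 0`, which leaves the slip length `γ₁ / (γ₃ * l)`.
-/

open Filter Set Asymptotics Topology

section LinearODE

variable {E : Type*} [NormedAddCommGroup E] [NormedSpace ℝ E]

lemma eq_exp_smul_of_hasDerivWithinAt_smul {s : Set ℝ} (hs : Convex ℝ s) {u : ℝ → E} {c : ℝ}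
    (hu : ∀ x ∈ s, HasDerivWithinAt u (c • u x) s x) {a x : ℝ} (ha : a ∈ s) (hx : x ∈ s) :
    u x = Real.exp (c * (x - a)) • u a := by
  have hderiv : ∀ y ∈ s,
      HasDerivWithinAt (fun y => Real.exp (-(c * (y - a))) • u y) 0 s y := fun y hy => by
    have hexp : HasDerivAt (fun y => Real.exp (-(c * (y - a))))
        (Real.exp (-(c * (y - a))) * -(c * 1)) y :=
      (((hasDerivAt_id y).sub_const a).const_mul c).neg.exp
    exact (hexp.hasDerivWithinAt.smul (hu y hy)).congr_deriv (by module)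
  have hconst : Real.exp (-(c * (x - a))) • u x = u a := by
    have hnorm := hs.norm_image_sub_le_of_norm_hasDerivWithin_le hderiv
      (fun _ _ => norm_zero.le) ha hx
    rw [zero_mul] at hnorm
    simpa using sub_eq_zero.mp (norm_le_zero_iff.mp hnorm)
  rw [← hconst, smul_smul, ← Real.exp_add, add_neg_cancel, Real.exp_zero, one_smul]

section SecondOrder

variable {s : Set ℝ} {v v' : ℝ → E} {l : ℝ}

lemma deriv_add_smul_eq_exp_smul (hs : Convex ℝ s)
    (hv : ∀ x ∈ s, HasDerivWithinAt v (v' x) s x)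
    (hv' : ∀ x ∈ s, HasDerivWithinAt v' (l ^ 2 • v x) s x)
    {a x : ℝ} (ha : a ∈ s) (hx : x ∈ s) :
    v' x + l • v x = Real.exp (l * (x - a)) • (v' a + l • v a) :=
  eq_exp_smul_of_hasDerivWithinAt_smul (u := fun y => v' y + l • v y) hs
    (fun y hy => ((hv' y hy).add ((hv y hy).const_smul l)).congr_deriv (by module)) ha hx

lemma two_mul_smul_eq_exp_smul_sub_exp_smul (hs : Convex ℝ s)
    (hv : ∀ x ∈ s, HasDerivWithinAt v (v' x) s x)
    (hv' : ∀ x ∈ s, HasDerivWithinAt v' (l ^ 2 • v x) s x)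
    {a x : ℝ} (ha : a ∈ s) (hx : x ∈ s) :
    (2 * l) • v x =
      Real.exp (l * (x - a)) • (v' a + l • v a) - Real.exp (-l * (x - a)) • (v' a - l • v a) := by
  have hplus := deriv_add_smul_eq_exp_smul hs hv hv' ha hx
  have hminus := deriv_add_smul_eq_exp_smul (l := -l) hs hv (by simpa only [neg_sq] using hv') ha hx
  rw [neg_smul, neg_smul, ← sub_eq_add_neg, ← sub_eq_add_neg] at hminus
  rw [← hplus, ← hminus]
  module

end SecondOrder

lemma tendsto_exp_mul_sub_atBot {l : ℝ} (hl : 0 < l) (a : ℝ) :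
    Tendsto (fun x => Real.exp (l * (x - a))) atBot (𝓝 0) :=
  Real.tendsto_exp_atBot.comp ((tendsto_atBot_add_const_right _ (-a) tendsto_id).const_mul_atBot hl)

lemma deriv_eq_smul_of_isLittleO_exp {v v' : ℝ → E} {l a : ℝ} (hl : 0 < l)
    (hv : ∀ x ∈ Iic a, HasDerivWithinAt v (v' x) (Iic a) x)
    (hv' : ∀ x ∈ Iic a, HasDerivWithinAt v' (l ^ 2 • v x) (Iic a) x)
    (hgrowth : v =o[atBot] fun x => Real.exp (-l * x)) :
    v' a = l • v a := by
  have hdecay := tendsto_exp_mul_sub_atBot hl a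
  have hleft : Tendsto (fun x => Real.exp (l * (x - a)) • (2 * l) • v x) atBot (𝓝 0) := by
    have hlim := hgrowth.tendsto_inv_smul_nhds_zero.const_smul (2 * l * Real.exp (-l * a))
    rw [smul_zero] at hlim
    refine hlim.congr fun x => ?_
    have hexp : Real.exp (l * (x - a)) = Real.exp (-l * a) * (Real.exp (-l * x))⁻¹ := by
      rw [← Real.exp_neg, ← Real.exp_add]
      congr 1
      ring
    rw [hexp]
    module
  have hright : Tendsto (fun x => Real.exp (l * (x - a)) • (2 * l) • v x) atBot
      (𝓝 (-(v' a - l • v a))) := by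
    have hlim := ((hdecay.mul hdecay).smul_const (v' a + l • v a)).sub_const (v' a - l • v a)
    rw [mul_zero, zero_smul, zero_sub] at hlim
    refine hlim.congr' ?_
    filter_upwards [Iic_mem_atBot a] with x hx
    rw [two_mul_smul_eq_exp_smul_sub_exp_smul (convex_Iic a) hv hv' self_mem_Iic hx, smul_sub,
      smul_smul, smul_smul, ← Real.exp_add (l * (x - a)) (-l * (x - a)), neg_mul, add_neg_cancel,
      Real.exp_zero, one_smul]
  exact sub_eq_zero.mp (neg_eq_zero.mp (tendsto_nhds_unique hright hleft))

end LinearODE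

lemma isLittleO_exp_neg_mul_atBot_of_norm_le {E : Type*} [Norm E] {v : ℝ → E} {l a M : ℝ}
    (hl : 0 < l) (hM : ∀ x ≤ a, ‖v x‖ ≤ M) : v =o[atBot] fun x => Real.exp (-l * x) := by
  have hbounded : v =O[atBot] fun _ => (1 : ℝ) :=
    .of_bound M <| (eventually_le_atBot a).mono fun x hx => by simpa using hM x hx
  have hexp : Tendsto (fun x => Real.exp (-l * x)) atBot atTop :=
    Real.tendsto_exp_atTop.comp (tendsto_id.const_mul_atBot_of_neg (neg_lt_zero.mpr hl))
  exact hbounded.trans_isLittleO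
    (isLittleO_const_left.mpr (.inr (tendsto_norm_atTop_atTop.comp hexp)))

lemma mul_sqrt_two_div_mul_sqrt_div_two_mul {γ k : ℝ} (hγ : 0 < γ) (hk : 0 < k) :
    γ * √(2 / (k * γ)) * √(k / (2 * γ)) = 1 := by
  rw [mul_assoc, ← Real.sqrt_mul (by positivity),
    show 2 / (k * γ) * (k / (2 * γ)) = γ⁻¹ ^ 2 by field_simp,
    Real.sqrt_sq (inv_nonneg.mpr hγ.le), mul_inv_cancel₀ hγ.ne']

theorem navier_slip_condition_general {E : Type*} [NormedAddCommGroup E] [NormedSpace ℝ E]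
    (γ₁ γ₃ ρ₃ d₀ : ℝ) (hγ₃ : 0 < γ₃) (hρ : 0 < ρ₃) (hd : 0 < d₀)
    (lam : ℝ) (hlam : lam = √(ρ₃ * d₀ / (2 * γ₃)))
    (v dv ddv : ℝ → E)
    (hv : ∀ x ≤ (0 : ℝ), HasDerivWithinAt v (dv x) (Iic 0) x)
    (hdv : ∀ x ≤ (0 : ℝ), HasDerivWithinAt dv (ddv x) (Iic 0) x)
    (hgrowth : v =o[atBot] fun x => Real.exp (-lam * x))
    (hode : ∀ x ≤ (0 : ℝ), (2 * γ₃) • ddv x - (ρ₃ * d₀) • v x = 0)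
    (w : ℝ → E) (dw0 : E) (hw : HasDerivAt w dw0 0)
    (hcont : w 0 = v 0)
    (hstress : γ₁ • dw0 = γ₃ • dv 0) :
    w 0 = (γ₁ * √(2 / (ρ₃ * d₀ * γ₃))) • dw0 := by
  have hlam_pos : 0 < lam := hlam ▸ by positivity
  have hode' : ∀ x ≤ (0 : ℝ), ddv x = lam ^ 2 • v x := fun x hx => by
    rw [hlam, Real.sq_sqrt (by positivity), div_eq_inv_mul, mul_smul,
      ← sub_eq_zero.mp (hode x hx), inv_smul_smul₀ (by positivity)]
  have hrobin : dv 0 = lam • v 0 :=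
    deriv_eq_smul_of_isLittleO_exp hlam_pos hv (fun x hx => hode' x hx ▸ hdv x hx) hgrowth
  have hslip : γ₃ * √(2 / (ρ₃ * d₀ * γ₃)) * lam = 1 :=
    hlam ▸ mul_sqrt_two_div_mul_sqrt_div_two_mul hγ₃ (mul_pos hρ hd)
  calc
    w 0 = (γ₃ * √(2 / (ρ₃ * d₀ * γ₃)) * lam) • v 0 := by rw [hslip, one_smul, hcont]
    _ = √(2 / (ρ₃ * d₀ * γ₃)) • γ₃ • dv 0 := by rw [hrobin]; module
    _ = (γ₁ * √(2 / (ρ₃ * d₀ * γ₃))) • dw0 := by rw [← hstress]; module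

/-- Navier-slip condition: a bounded solution of the elliptic law in the solid,
coupled to the fluid tangential velocity w by continuity of velocity and of tangential stress,
satisfies the Navier-slip condition w(0) = L·w'(0) with slip length L = γ₁√(2/(ρ₃d₀γ₃)). -/
theorem navier_slip_condition (γ₁ γ₃ ρ₃ d₀ : ℝ)
    (hγ₁ : 0 < γ₁) (hγ₃ : 0 < γ₃) (hρ : 0 < ρ₃) (hd : 0 < d₀)
    (lam : ℝ) (hlam : lam = Real.sqrt (ρ₃ * d₀ / (2 * γ₃)))
    (v dv ddv : ℝ → ℝ)
    (hv : ∀ x ≤ (0 : ℝ), HasDerivWithinAt v (dv x) (Set.Iic 0) x)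
    (hdv : ∀ x ≤ (0 : ℝ), HasDerivWithinAt dv (ddv x) (Set.Iic 0) x)
    (hbd : ∃ M : ℝ, ∀ x ≤ (0 : ℝ), |v x| ≤ M)
    (hode : ∀ x ≤ (0 : ℝ), 2 * γ₃ * ddv x - ρ₃ * d₀ * v x = 0)
    (w : ℝ → ℝ) (dw0 : ℝ) (hw : HasDerivAt w dw0 0)
    (hcont : w 0 = v 0)
    (hstress : γ₁ * dw0 = γ₃ * dv 0) :
    w 0 = (γ₁ * Real.sqrt (2 / (ρ₃ * d₀ * γ₃))) * dw0 := by
  obtain ⟨_, hM⟩ := hbd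
  exact navier_slip_condition_general γ₁ γ₃ ρ₃ d₀ hγ₃ hρ hd lam hlam v dv ddv hv hdv
    (isLittleO_exp_neg_mul_atBot_of_norm_le (hlam ▸ by positivity) hM) hode w dw0 hw hcont hstress
end

section
/- Let σ > 0, α > 0, and ν, r ∈ ℝ, and let ψ(z) = (3/2)sech²(3z) (the derivative of the tanh interface profile). If μ : ℝ → ℝ is twice differentiable and bounded and satisfies −ν·σ·ψ(z) − μ''(z) = σ·ψ(z)·(r − α·μ(z)) for all z ∈ ℝ, then μ is the constant function μ(z) = (ν + r)/α. In particular the normal interface velocity satisfies ν = α·μ − r. -/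
/-- The derivative of the tanh interface profile, ψ(z) = (3/2)sech²(3z). -/
noncomputable def psiProf (z : ℝ) : ℝ := (3 / 2) * (1 / Real.cosh (3 * z)) ^ 2

/-!
The deviation `w = μ - (ν + r) / α` from equilibrium solves `w'' = q w` with `q = σ α ψ ≥ 0`.
Hence `(w²)'' = 2 (w'² + q w²) ≥ 0`, so `w²` is convex. Being bounded on the whole line, it is
constant; then `w'² + q w² = 0`, which makes `w` constant, and zero because `q` is positive
somewhere.
-/

open Set Bornology
open scoped RealInnerProductSpace

lemma eq_of_convexOn_univ_of_bddAbove {𝕜 E : Type*} [Field 𝕜] [LinearOrder 𝕜]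
    [IsStrictOrderedRing 𝕜] [AddCommGroup E] [Module 𝕜 E] {f : E → 𝕜}
    (hf : ConvexOn 𝕜 univ f) (hbdd : BddAbove (range f)) (x y : E) : f x = f y := by
  suffices h : ∀ x y, f y ≤ f x from le_antisymm (h y x) (h x y)
  intro x y
  obtain ⟨M, hM⟩ := hbdd
  have hfM (z : E) : f z ≤ M := hM (mem_range_self z)
  by_contra! hxy
  have hden : 0 < M + 1 - f x := by linarith [hfM x]
  -- The chord from `(x, f x)` through `(y, f y)` has height `M + 1` at `z`.
  let t := (f y - f x) / (M + 1 - f x)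
  let z := x + t⁻¹ • (y - x)
  have ht : 0 < t := div_pos (sub_pos.2 hxy) hden
  have ht_le : t ≤ 1 := (div_le_one hden).2 (by linarith [hfM y])
  have hyz : (1 - t) • x + t • z = y := by
    rw [smul_add, smul_inv_smul₀ ht.ne']
    module
  have : f y < f y := calc
    f y = f ((1 - t) • x + t • z) := by rw [hyz]
    _ ≤ (1 - t) * f x + t * f z :=
      hf.2 (mem_univ x) (mem_univ z) (sub_nonneg.2 ht_le) ht.le (sub_add_cancel 1 t)
    _ < (1 - t) * f x + t * (M + 1) := by
      gcongr
      exact (hfM z).trans_lt (lt_add_one M)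
    _ = f x + t * (M + 1 - f x) := by ring
    _ = f y := by rw [div_mul_cancel₀ _ hden.ne', add_sub_cancel]
  exact this.false

section Liouville

variable {F : Type*} [NormedAddCommGroup F] [InnerProductSpace ℝ F] {w w' w'' : ℝ → F}

lemma hasDerivAt_two_mul_inner_deriv {z : ℝ} (hw : HasDerivAt w (w' z) z)
    (hw' : HasDerivAt w' (w'' z) z) :
    HasDerivAt (fun z ↦ 2 * ⟪w z, w' z⟫) (2 * (⟪w z, w'' z⟫ + ‖w' z‖ ^ 2)) z := by
  simpa only [real_inner_self_eq_norm_sq] using (hw.inner ℝ hw').const_mul 2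

lemma convexOn_norm_sq_of_inner_deriv2_nonneg (hw : ∀ z, HasDerivAt w (w' z) z)
    (hw' : ∀ z, HasDerivAt w' (w'' z) z) (hinner : ∀ z, 0 ≤ ⟪w z, w'' z⟫) :
    ConvexOn ℝ univ (‖w ·‖ ^ 2) :=
  convexOn_of_hasDerivWithinAt2_nonneg convex_univ
    (fun z _ ↦ (hw z).norm_sq.continuousAt.continuousWithinAt)
    (fun z _ ↦ (hw z).norm_sq.hasDerivWithinAt)
    (fun z _ ↦ (hasDerivAt_two_mul_inner_deriv (hw z) (hw' z)).hasDerivWithinAt)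
    (fun z _ ↦ mul_nonneg zero_le_two (add_nonneg (hinner z) (sq_nonneg _)))

lemma deriv_eq_zero_of_isBounded_of_inner_deriv2_nonneg (hw : ∀ z, HasDerivAt w (w' z) z)
    (hw' : ∀ z, HasDerivAt w' (w'' z) z) (hinner : ∀ z, 0 ≤ ⟪w z, w'' z⟫)
    (hbdd : IsBounded (range w)) (z : ℝ) : w' z = 0 := by
  obtain ⟨M, hM⟩ := isBounded_iff_forall_norm_le.1 hbdd
  have hsq_bdd : BddAbove (range (‖w ·‖ ^ 2)) :=
    ⟨M ^ 2, forall_mem_range.2 fun z ↦ pow_le_pow_left₀ (norm_nonneg _) (hM _ (mem_range_self z)) 2⟩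
  have hsq_const : (‖w ·‖ ^ 2) = fun _ ↦ ‖w 0‖ ^ 2 := funext fun z ↦
    eq_of_convexOn_univ_of_bddAbove (convexOn_norm_sq_of_inner_deriv2_nonneg hw hw' hinner)
      hsq_bdd z 0
  have hderiv : (fun z ↦ 2 * ⟪w z, w' z⟫) = fun _ ↦ 0 := funext fun z ↦
    (hw z).norm_sq.unique (hsq_const ▸ hasDerivAt_const z _)
  have hderiv2 : 2 * (⟪w z, w'' z⟫ + ‖w' z‖ ^ 2) = 0 :=
    (hasDerivAt_two_mul_inner_deriv (hw z) (hw' z)).unique (hderiv ▸ hasDerivAt_const z 0)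
  have hnorm : ‖w' z‖ ^ 2 = 0 := by linarith [hinner z, sq_nonneg ‖w' z‖]
  exact norm_eq_zero.1 (pow_eq_zero_iff two_ne_zero |>.1 hnorm)

lemma eq_zero_of_isBounded_of_deriv2_eq_smul {q : ℝ → ℝ} (hw : ∀ z, HasDerivAt w (w' z) z)
    (hw' : ∀ z, HasDerivAt w' (w'' z) z) (hq : ∀ z, 0 ≤ q z) (hq_pos : ∃ z, 0 < q z)
    (heq : ∀ z, w'' z = q z • w z) (hbdd : IsBounded (range w)) (z : ℝ) : w z = 0 := by
  have hinner (z : ℝ) : 0 ≤ ⟪w z, w'' z⟫ := by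
    rw [heq, real_inner_smul_right]
    exact mul_nonneg (hq z) real_inner_self_nonneg
  have hw'_zero : w' = fun _ ↦ 0 :=
    funext (deriv_eq_zero_of_isBounded_of_inner_deriv2_nonneg hw hw' hinner hbdd)
  obtain ⟨z₀, hz₀⟩ := hq_pos
  have hw''_zero : q z₀ • w z₀ = 0 :=
    heq z₀ ▸ (hw' z₀).unique (hw'_zero ▸ hasDerivAt_const z₀ 0)
  calc
    w z = w z₀ := is_const_of_deriv_eq_zero (fun z ↦ (hw z).differentiableAt)
      (fun z ↦ (hw z).deriv.trans (congrFun hw'_zero z)) z z₀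
    _ = 0 := (smul_eq_zero_iff_right hz₀.ne').1 hw''_zero

end Liouville

lemma psiProf_pos (z : ℝ) : 0 < psiProf z := by
  have := Real.cosh_pos (3 * z)
  unfold psiProf
  positivity

theorem reactive_interface_chemical_potential_general
    {σ α ν r : ℝ} (hσ : 0 < σ) (hα : 0 < α) {ψ μ dμ ddμ : ℝ → ℝ}
    (hψ : ∀ z, 0 ≤ ψ z) (hψ_pos : ∃ z, 0 < ψ z)
    (hμ : ∀ z, HasDerivAt μ (dμ z) z) (hdμ : ∀ z, HasDerivAt dμ (ddμ z) z)
    (hbd : ∃ M, ∀ z, |μ z| ≤ M)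
    (hode : ∀ z, -ν * σ * ψ z - ddμ z = σ * ψ z * (r - α * μ z)) :
    (∀ z, μ z = (ν + r) / α) ∧ ν = α * μ 0 - r := by
  have hequilibrium : α * ((ν + r) / α) = ν + r := mul_div_cancel₀ _ hα.ne'
  have hdev (z : ℝ) : ddμ z = (σ * α * ψ z) • (μ z - (ν + r) / α) := by
    rw [smul_eq_mul]
    linear_combination -hode z + σ * ψ z * hequilibrium
  have hdev_bdd : IsBounded (range fun z ↦ μ z - (ν + r) / α) := by
    obtain ⟨M, hM⟩ := hbd
    exact isBounded_iff_forall_norm_le.2 ⟨M + |(ν + r) / α|, forall_mem_range.2 fun z ↦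
      (abs_sub _ _).trans (by gcongr; exact hM z)⟩
  have hμ_const (z : ℝ) : μ z = (ν + r) / α := sub_eq_zero.1 <|
    eq_zero_of_isBounded_of_deriv2_eq_smul (fun z ↦ (hμ z).sub_const _) hdμ
      (fun z ↦ mul_nonneg (mul_pos hσ hα).le (hψ z))
      (hψ_pos.imp fun _ ↦ mul_pos (mul_pos hσ hα)) hdev hdev_bdd z
  refine ⟨hμ_const, ?_⟩
  rw [hμ_const 0, hequilibrium, add_sub_cancel_right]

/-- the bounded solution of the chemical potential equation
−νσψ − μ'' = σψ(r − αμ) at the reactive interface is the constant μ = (ν + r)/α;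
in particular the normal velocity satisfies ν = αμ − r. -/
theorem reactive_interface_chemical_potential
    (σ α ν r : ℝ) (hσ : 0 < σ) (hα : 0 < α)
    (μ dμ ddμ : ℝ → ℝ)
    (hμ : ∀ z : ℝ, HasDerivAt μ (dμ z) z)
    (hdμ : ∀ z : ℝ, HasDerivAt dμ (ddμ z) z)
    (hbd : ∃ M : ℝ, ∀ z : ℝ, |μ z| ≤ M)
    (hode : ∀ z : ℝ, -ν * σ * psiProf z - ddμ z = σ * psiProf z * (r - α * μ z)) :
    (∀ z : ℝ, μ z = (ν + r) / α) ∧ ν = α * μ 0 - r :=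
  reactive_interface_chemical_potential_general hσ hα (fun z ↦ (psiProf_pos z).le)
    ⟨0, psiProf_pos 0⟩ hμ hdμ hbd hode
end
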